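/- Let S be a type, step : S → S a deterministic closed-loop transition map, φ, φ₀ : S → ℝ, and η ≥ 0. Assume the safe action constraint φ(step s) < max{φ(s) − η, 0} holds at every state s, and assume the zero-sublevel set of φ is contained in the safe set, i.e. φ(s) ≤ 0 implies φ₀(s) ≤ 0 for all s. Then the set {s | φ(s) ≤ 0} ∩ {s | φ₀(s) ≤ 0} is forward invariant along trajectories: for every initial state s₀ in this set and every natural number n, the iterate step^[n](s₀) lies in {s | φ(s) ≤ 0} ∩ {s | φ₀(s) ≤ 0}. -/

import Mathlib

section SafetyIndex

open Set

variable {S G : Type*} [AddGroup G] [SemilatticeSup G] [AddRightMono G]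
  {step : S → S} {φ : S → G} {η : G}

theorem mapsTo_sublevel_of_le_sup (hη : 0 ≤ η)
    (hsafe : ∀ s, φ s ≤ 0 → φ (step s) ≤ (φ s - η) ⊔ 0) :
    MapsTo step {s | φ s ≤ 0} {s | φ s ≤ 0} := by
  intro s (hs : φ s ≤ 0)
  have hdecrease : φ s - η ≤ 0 := sub_nonpos.mpr (hs.trans hη)
  exact (hsafe s hs).trans (sup_le hdecrease le_rfl)

theorem forward_invariance_general {safe : Set S} (hη : 0 ≤ η)
    (hsafe : ∀ s, φ s ≤ 0 → φ (step s) ≤ (φ s - η) ⊔ 0)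
    (hsub : {s | φ s ≤ 0} ⊆ safe) (n : ℕ) :
    MapsTo step^[n] ({s | φ s ≤ 0} ∩ safe) ({s | φ s ≤ 0} ∩ safe) := by
  rw [inter_eq_left.mpr hsub]
  exact (mapsTo_sublevel_of_le_sup hη hsafe).iterate n

end SafetyIndex

/-- Forward invariance of `{s | φ s ≤ 0} ∩ {s | φ₀ s ≤ 0}` along trajectories:
if the safe action constraint holds everywhere and the zero-sublevel set of the
safety index `φ` is contained in the safe set `{s | φ₀ s ≤ 0}`, then every
iterate of `step` starting from the intersection stays in the intersection. -/
theorem forward_invariance {S : Type*} (step : S → S) (φ φ₀ : S → ℝ)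
    (η : ℝ) (hη : 0 ≤ η)
    (hsafe : ∀ s : S, φ (step s) < max (φ s - η) 0)
    (hsub : ∀ s : S, φ s ≤ 0 → φ₀ s ≤ 0)
    (s₀ : S) (h₀ : s₀ ∈ {s : S | φ s ≤ 0} ∩ {s : S | φ₀ s ≤ 0}) :
    ∀ n : ℕ, step^[n] s₀ ∈ {s : S | φ s ≤ 0} ∩ {s : S | φ₀ s ≤ 0} :=
  fun n ↦ forward_invariance_general hη (fun s _ ↦ (hsafe s).le) hsub n h₀
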